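/- Theorem (p = 1): let Q be a Lie point characteristic generating divergence variational symmetries of the difference Lagrangian L, i.e. (pr v L)(n,u) = R(n+1,u) − R(n,u) for all n and u, where R is a difference function depending only on forward values. Then the prolonged vector field annihilates the first integral P = T(L) − R: (pr v P)(n,u) = 0 for all n ∈ ℤ and all fields u : ℤ → ℝ^q. -/

import Mathlib

open scoped Classical

/-- Multi-indices / lattice points of the lattice `ℤ^p`. -/
abbrev Idx (p : ℕ) : Type := Fin p → ℤ

/-- Fields `u : ℤ^p → ℝ^q`. -/
abbrev Fld (p q : ℕ) : Type := Idx p → Fin q → ℝ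

/-- Difference functions (raw): functions of a lattice point and a field. -/
abbrev DFun (p q : ℕ) : Type := Idx p → Fld p q → ℝ

/-- Replace the value `u^α(m)` of the field `u` by `t`. -/
noncomputable def upd {p q : ℕ} (u : Fld p q) (m : Idx p) (α : Fin q) (t : ℝ) : Fld p q :=
  fun m' β => if m' = m ∧ β = α then t else u m' β

/-- The partial derivative `∂F/∂u_J^α (n,u)`: the derivative of `F(n,u)` with
respect to the value `u^α(n+J)`. -/
noncomputable def pd {p q : ℕ} (F : DFun p q) (J : Idx p) (α : Fin q) : DFun p q :=
  fun n u => deriv (fun t => F n (upd u (n + J) α t)) (u (n + J) α)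

/-- The shift operator `S_K`. -/
def Sh {p q : ℕ} (K : Idx p) (F : DFun p q) : DFun p q := fun n u => F (n + K) u

/-- `F` is a difference function with stencil `S`: `F(n,u)` depends on `u` only
through the finitely many values `u(n+J)`, `J ∈ S`, smoothly in those values. -/
def IsDiffFun {p q : ℕ} (F : DFun p q) (S : Finset (Idx p)) : Prop :=
  ∃ G : Idx p → (({J // J ∈ S} → Fin q → ℝ) → ℝ),
    (∀ n, ContDiff ℝ (⊤ : ℕ∞) (G n)) ∧ ∀ n u, F n u = G n fun J α => u (n + J.1) α

/-- The prolonged vector field of a characteristic `Q`, acting on a difference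
function `F` with stencil `S`:
`(pr v F)(n,u) = Σ_α Σ_{J ∈ S} (S_J Q^α)(n,u) ⬝ ∂F/∂u_J^α(n,u)`. -/
noncomputable def prv {p q : ℕ} (Q : Fin q → DFun p q) (S : Finset (Idx p))
    (F : DFun p q) : DFun p q :=
  fun n u => ∑ α : Fin q, ∑ J ∈ S, Q α (n + J) u * pd F J α n u

/-- The difference divergence of a `p`-tuple of difference functions. -/
noncomputable def DDiv {p q : ℕ} (P : Fin p → DFun p q) : DFun p q :=
  fun n u => ∑ i : Fin p, (P i (n + Pi.single i (1 : ℤ)) u - P i n u)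

/-- The Euler–Lagrange expression `E_α(F)(n,u) = Σ_{J ∈ S} (∂F/∂u_J^α)(n−J,u)`
of a difference function `F` with stencil `S`. -/
noncomputable def EL {p q : ℕ} (S : Finset (Idx p)) (F : DFun p q) (α : Fin q) : DFun p q :=
  fun n u => ∑ J ∈ S, pd F J α (n - J) u

/-- The higher Euler operator
`E_{u_J^α}(L)(n,u) = Σ_{J0 ≥ 0} (∂L/∂u_{J0+J}^α)(n−J0,u)` for a difference
function `L` depending only on forward values, with stencil `S`
(reindexed by `K = J0 + J`; terms with `K ∉ S` vanish). -/
noncomputable def hEuler {p q : ℕ} (S : Finset (Idx p)) (L : DFun p q) (J : Idx p)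
    (α : Fin q) : DFun p q :=
  fun n u => ∑ K ∈ S.filter (fun K => J ≤ K), pd L K α (n - (K - J)) u

/-- `T^i(L)(n,u) = Σ_α Σ_{J ≥ 1_i} (S_{J−1_i} Q^α)(n,u) ⬝ E_{u_J^α}(L)(n−1_i,u)`
(a finite sum: only `J` with `1_i ≤ J ≤ K` for some stencil point `K` contribute). -/
noncomputable def TT {p q : ℕ} (Q : Fin q → DFun p q) (S : Finset (Idx p)) (i : Fin p)
    (L : DFun p q) : DFun p q :=
  fun n u => ∑ α : Fin q, ∑ J ∈ S.biUnion (fun K => Finset.Icc (Pi.single i (1 : ℤ)) K),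
    Q α (n + J - Pi.single i (1 : ℤ)) u * hEuler S L J α (n - Pi.single i (1 : ℤ)) u

/-- Restriction of a field to a finite window. -/
def rs {p q : ℕ} (W : Finset (Idx p)) (u : Fld p q) : {m // m ∈ W} → Fin q → ℝ :=
  fun m α => u m.1 α

/-- Smooth functions of finitely many field values. -/
def Sm {p q : ℕ} (F : Fld p q → ℝ) : Prop :=
  ∃ W : Finset (Idx p), ∃ G : ({m // m ∈ W} → Fin q → ℝ) → ℝ,
    ContDiff ℝ (⊤ : ℕ∞) G ∧ ∀ u, F u = G (rs W u)

/-- Derivative with respect to the value `u^α(m)`. -/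
noncomputable def dd {p q : ℕ} (m : Idx p) (α : Fin q) (F : Fld p q → ℝ) : Fld p q → ℝ :=
  fun u => deriv (fun t => F (upd u m α t)) (u m α)

/-- Unit field. -/
noncomputable def ef {p q : ℕ} (m : Idx p) (α : Fin q) : Fld p q :=
  fun m' β => if m' = m ∧ β = α then 1 else 0

lemma upd_self {p q : ℕ} (u : Fld p q) (m : Idx p) (α : Fin q) : upd u m α (u m α) = u := by
  funext m' β
  unfold upd
  split_ifs with h
  · rw [h.1, h.2]
  · rfl

lemma rs_upd {p q : ℕ} (W : Finset (Idx p)) (u : Fld p q) (m : Idx p) (α : Fin q) (t : ℝ) :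
    rs W (upd u m α t) = rs W u + (t - u m α) • rs W (ef m α) := by
  funext m' β
  simp only [rs, upd, ef, Pi.add_apply, Pi.smul_apply, smul_eq_mul]
  split_ifs with h
  · rw [h.1, h.2]; ring
  · ring

lemma hasDeriv_upd {p q : ℕ} {W : Finset (Idx p)} {G : ({m // m ∈ W} → Fin q → ℝ) → ℝ}
    (hG : ContDiff ℝ (⊤ : ℕ∞) G) {F : Fld p q → ℝ} (hF : ∀ u, F u = G (rs W u))
    (m : Idx p) (α : Fin q) (u : Fld p q) :
    HasDerivAt (fun t => F (upd u m α t)) (fderiv ℝ G (rs W u) (rs W (ef m α))) (u m α) := by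
  have h1 : (fun t => F (upd u m α t)) =
      fun t => G (rs W u + (t - u m α) • rs W (ef m α)) := by
    funext t; rw [hF, rs_upd]
  rw [h1]
  have h2 : HasDerivAt (fun t : ℝ => rs W u + (t - u m α) • rs W (ef m α))
      (rs W (ef m α)) (u m α) := by
    have := (((hasDerivAt_id (u m α)).sub_const (u m α)).smul_const
      (rs W (ef (q := q) m α))).const_add (rs W u)
    simpa using this
  have h3 : HasFDerivAt G (fderiv ℝ G (rs W u)) (rs W u + (u m α - u m α) • rs W (ef m α)) := by
    have : rs W u + (u m α - u m α) • rs W (ef m α) = rs W u := by simp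
    rw [this]
    exact ((hG.differentiable (by simp)) _).hasFDerivAt
  exact h3.comp_hasDerivAt (u m α) h2

lemma dd_eq {p q : ℕ} {W : Finset (Idx p)} {G : ({m // m ∈ W} → Fin q → ℝ) → ℝ}
    (hG : ContDiff ℝ (⊤ : ℕ∞) G) {F : Fld p q → ℝ} (hF : ∀ u, F u = G (rs W u))
    (m : Idx p) (α : Fin q) (u : Fld p q) :
    dd m α F u = fderiv ℝ G (rs W u) (rs W (ef m α)) :=
  (hasDeriv_upd hG hF m α u).deriv

lemma Sm.diff {p q : ℕ} {F : Fld p q → ℝ} (h : Sm F) (m : Idx p) (α : Fin q) (u : Fld p q) :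
    DifferentiableAt ℝ (fun t => F (upd u m α t)) (u m α) := by
  obtain ⟨W, G, hG, hF⟩ := h
  exact (hasDeriv_upd hG hF m α u).differentiableAt

lemma contDiff_fd {E : Type*} [NormedAddCommGroup E] [NormedSpace ℝ E] {G : E → ℝ}
    (hG : ContDiff ℝ (⊤ : ℕ∞) G) (v : E) :
    ContDiff ℝ (⊤ : ℕ∞) (fun x => fderiv ℝ G x v) :=
  (hG.fderiv_right (m := (⊤ : ℕ∞)) (by simp)).clm_apply contDiff_const

lemma Sm.dd {p q : ℕ} {F : Fld p q → ℝ} (h : Sm F) (m : Idx p) (α : Fin q) :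
    Sm (dd m α F) := by
  obtain ⟨W, G, hG, hF⟩ := h
  exact ⟨W, fun x => fderiv ℝ G x (rs W (ef m α)), contDiff_fd hG _, fun u => dd_eq hG hF m α u⟩

lemma dd_comm {p q : ℕ} {F : Fld p q → ℝ} (h : Sm F) (m m' : Idx p) (α β : Fin q)
    (u : Fld p q) : dd m α (dd m' β F) u = dd m' β (dd m α F) u := by
  obtain ⟨W, G, hG, hF⟩ := h
  have key : ∀ (a b : Idx p) (γ δ : Fin q), dd a γ (dd b δ F) u =
      fderiv ℝ (fderiv ℝ G) (rs W u) (rs W (ef a γ)) (rs W (ef b δ)) := by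
    intro a b γ δ
    rw [dd_eq (contDiff_fd hG (rs W (ef b δ))) (fun u => dd_eq hG hF b δ u)]
    have hd : DifferentiableAt ℝ (fderiv ℝ G) (rs W u) :=
      (hG.fderiv_right (m := (⊤ : ℕ∞)) (by simp)).differentiable (by simp) _
    rw [fderiv_clm_apply hd (differentiableAt_const _)]
    simp
  rw [key, key]
  have hs : IsSymmSndFDerivAt ℝ G (rs W u) :=
    hG.contDiffAt.isSymmSndFDerivAt (by
      rw [minSmoothness_of_isRCLikeNormedField]
      exact WithTop.coe_le_coe.mpr (le_top : (2 : ℕ∞) ≤ ⊤))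
  exact hs _ _

lemma Sm.mono {p q : ℕ} {F : Fld p q → ℝ} {W W' : Finset (Idx p)} (hW : W ⊆ W')
    {G : ({m // m ∈ W} → Fin q → ℝ) → ℝ}
    (hG : ContDiff ℝ (⊤ : ℕ∞) G) (hF : ∀ u, F u = G (rs W u)) :
    ∃ G' : ({m // m ∈ W'} → Fin q → ℝ) → ℝ,
      ContDiff ℝ (⊤ : ℕ∞) G' ∧ ∀ u, F u = G' (rs W' u) := by
  refine ⟨fun x => G (fun m α => x ⟨m.1, hW m.2⟩ α), hG.comp ?_, fun u => hF u⟩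
  fun_prop

lemma Sm.common {p q : ℕ} {F F' : Fld p q → ℝ} (h : Sm F) (h' : Sm F') :
    ∃ W : Finset (Idx p), ∃ G G' : ({m // m ∈ W} → Fin q → ℝ) → ℝ,
      ContDiff ℝ (⊤ : ℕ∞) G ∧ ContDiff ℝ (⊤ : ℕ∞) G' ∧
      (∀ u, F u = G (rs W u)) ∧ (∀ u, F' u = G' (rs W u)) := by
  obtain ⟨W, G, hG, hF⟩ := h
  obtain ⟨W', G', hG', hF'⟩ := h'
  obtain ⟨H, hH, h1⟩ := Sm.mono (Finset.subset_union_left (s₁ := W) (s₂ := W')) hG hF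
  obtain ⟨H', hH', h1'⟩ := Sm.mono (Finset.subset_union_right (s₁ := W) (s₂ := W')) hG' hF'
  exact ⟨_, H, H', hH, hH', h1, h1'⟩

lemma Sm.add {p q : ℕ} {F F' : Fld p q → ℝ} (h : Sm F) (h' : Sm F') :
    Sm (fun u => F u + F' u) := by
  obtain ⟨W, G, G', hG, hG', hF, hF'⟩ := h.common h'
  exact ⟨W, fun x => G x + G' x, hG.add hG', fun u => by simp only [hF, hF']⟩

lemma Sm.mul {p q : ℕ} {F F' : Fld p q → ℝ} (h : Sm F) (h' : Sm F') :
    Sm (fun u => F u * F' u) := by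
  obtain ⟨W, G, G', hG, hG', hF, hF'⟩ := h.common h'
  exact ⟨W, fun x => G x * G' x, hG.mul hG', fun u => by simp only [hF, hF']⟩

lemma Sm.zero {p q : ℕ} : Sm (fun _ : Fld p q => (0 : ℝ)) :=
  ⟨∅, fun _ => 0, contDiff_const, fun _ => rfl⟩

lemma Sm.sum {p q : ℕ} {ι : Type*} (s : Finset ι) {F : ι → Fld p q → ℝ}
    (h : ∀ i ∈ s, Sm (F i)) : Sm (fun u => ∑ i ∈ s, F i u) := by
  induction s using Finset.induction_on with
  | empty => simpa using Sm.zero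
  | insert a s ha ih =>
    simp only [Finset.sum_insert ha]
    exact (h a (by simp)).add (ih fun i hi => h i (by simp [hi]))

lemma dd_add {p q : ℕ} {F F' : Fld p q → ℝ} (h : Sm F) (h' : Sm F') (m : Idx p) (α : Fin q)
    (u : Fld p q) : dd m α (fun u => F u + F' u) u = dd m α F u + dd m α F' u :=
  deriv_fun_add (h.diff m α u) (h'.diff m α u)

lemma dd_sub {p q : ℕ} {F F' : Fld p q → ℝ} (h : Sm F) (h' : Sm F') (m : Idx p) (α : Fin q)
    (u : Fld p q) : dd m α (fun u => F u - F' u) u = dd m α F u - dd m α F' u :=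
  deriv_fun_sub (h.diff m α u) (h'.diff m α u)

lemma dd_mul {p q : ℕ} {F F' : Fld p q → ℝ} (h : Sm F) (h' : Sm F') (m : Idx p) (α : Fin q)
    (u : Fld p q) :
    dd m α (fun u => F u * F' u) u = dd m α F u * F' u + F u * dd m α F' u := by
  have := deriv_fun_mul (h.diff m α u) (h'.diff m α u)
  rw [upd_self] at this
  exact this

lemma dd_sum {p q : ℕ} {ι : Type*} (s : Finset ι) {F : ι → Fld p q → ℝ}
    (h : ∀ i ∈ s, Sm (F i)) (m : Idx p) (α : Fin q) (u : Fld p q) :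
    dd m α (fun u => ∑ i ∈ s, F i u) u = ∑ i ∈ s, dd m α (F i) u :=
  deriv_fun_sum fun i hi => (h i hi).diff m α u

lemma IsDiffFun.sm {p q : ℕ} {F : DFun p q} {S : Finset (Idx p)} (h : IsDiffFun F S)
    (n : Idx p) : Sm (F n) := by
  obtain ⟨G, hG, hF⟩ := h
  refine ⟨S.image (fun J => n + J),
    fun x => G n (fun J α => x ⟨n + J.1, Finset.mem_image_of_mem _ J.2⟩ α),
    (hG n).comp ?_, fun u => hF n u⟩
  fun_prop

lemma IsDiffFun.dd_zero {p q : ℕ} {F : DFun p q} {S : Finset (Idx p)} (h : IsDiffFun F S)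
    (n m : Idx p) (hm : m - n ∉ S) (α : Fin q) (u : Fld p q) : dd m α (F n) u = 0 := by
  obtain ⟨G, hG, hF⟩ := h
  have : (fun t => F n (upd u m α t)) = fun _ => F n u := by
    funext t
    rw [hF, hF]
    congr 1
    funext J β
    unfold upd
    rw [if_neg]
    rintro ⟨h1, -⟩
    apply hm
    rw [← h1]
    simpa using J.2
  unfold dd
  rw [this]
  simp

/-- Truncated prolongation. -/
noncomputable def DA {p q : ℕ} (Q : Fin q → DFun p q) (A : Finset (Idx p))
    (F : Fld p q → ℝ) : Fld p q → ℝ :=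
  fun u => ∑ α : Fin q, ∑ m ∈ A, Q α m u * dd m α F u

section DAlemmas
variable {p q : ℕ} {Q : Fin q → DFun p q}

lemma Sm.DA (hQ : ∀ α, IsDiffFun (Q α) ({(0 : Idx p)} : Finset (Idx p)))
    {F : Fld p q → ℝ} (h : Sm F) (A : Finset (Idx p)) : Sm (DA Q A F) :=
  Sm.sum _ fun α _ => Sm.sum _ fun m _ => ((hQ α).sm m).mul (h.dd m α)

lemma DA_add {F F' : Fld p q → ℝ} (h : Sm F) (h' : Sm F') (A : Finset (Idx p))
    (u : Fld p q) : DA Q A (fun u => F u + F' u) u = DA Q A F u + DA Q A F' u := by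
  simp only [DA, dd_add h h', mul_add, Finset.sum_add_distrib]

lemma DA_sub {F F' : Fld p q → ℝ} (h : Sm F) (h' : Sm F') (A : Finset (Idx p))
    (u : Fld p q) : DA Q A (fun u => F u - F' u) u = DA Q A F u - DA Q A F' u := by
  simp only [DA, dd_sub h h', mul_sub, Finset.sum_sub_distrib]

lemma DA_sum {ι : Type*} (s : Finset ι) {F : ι → Fld p q → ℝ}
    (h : ∀ i ∈ s, Sm (F i)) (A : Finset (Idx p)) (u : Fld p q) :
    DA Q A (fun u => ∑ i ∈ s, F i u) u = ∑ i ∈ s, DA Q A (F i) u := by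
  simp only [DA, dd_sum s h, Finset.mul_sum]
  rw [Finset.sum_comm (s := s)]
  refine Finset.sum_congr rfl fun α _ => ?_
  rw [Finset.sum_comm]

lemma DA_disj (hQ : ∀ α, IsDiffFun (Q α) ({(0 : Idx p)} : Finset (Idx p)))
    {F : Fld p q → ℝ} (h : Sm F) {A B : Finset (Idx p)} (hAB : Disjoint A B) (u : Fld p q) :
    DA Q A (DA Q B F) u = ∑ α : Fin q, ∑ m ∈ A, ∑ β : Fin q, ∑ m' ∈ B,
      Q α m u * (Q β m' u * dd m α (dd m' β F) u) := by
  unfold DA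
  refine Finset.sum_congr rfl fun α _ => Finset.sum_congr rfl fun m hm => ?_
  rw [dd_sum Finset.univ (fun β _ => Sm.sum _ fun m' _ => ((hQ β).sm m').mul (h.dd m' β)),
    Finset.mul_sum]
  refine Finset.sum_congr rfl fun β _ => ?_
  rw [dd_sum B (fun m' _ => ((hQ β).sm m').mul (h.dd m' β)), Finset.mul_sum]
  refine Finset.sum_congr rfl fun m' hm' => ?_
  rw [dd_mul ((hQ β).sm m') (h.dd m' β), (hQ β).dd_zero m' m]
  · ring
  · rw [Finset.mem_singleton, sub_eq_zero]
    rintro rfl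
    exact Finset.disjoint_left.mp hAB hm hm'

lemma DA_comm_disj (hQ : ∀ α, IsDiffFun (Q α) ({(0 : Idx p)} : Finset (Idx p)))
    {F : Fld p q → ℝ} (h : Sm F) {A B : Finset (Idx p)} (hAB : Disjoint A B) (u : Fld p q) :
    DA Q A (DA Q B F) u = DA Q B (DA Q A F) u := by
  rw [DA_disj hQ h hAB, DA_disj hQ h hAB.symm]
  have e1 : ∀ α : Fin q, ∑ m ∈ A, ∑ β : Fin q, ∑ m' ∈ B,
      Q α m u * (Q β m' u * dd m α (dd m' β F) u) = ∑ β : Fin q, ∑ m' ∈ B, ∑ m ∈ A,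
      Q β m' u * (Q α m u * dd m' β (dd m α F) u) := by
    intro α
    rw [Finset.sum_comm]
    refine Finset.sum_congr rfl fun β _ => ?_
    rw [Finset.sum_comm]
    refine Finset.sum_congr rfl fun m' _ => Finset.sum_congr rfl fun m _ => ?_
    rw [dd_comm h]
    ring
  simp only [e1]
  rw [Finset.sum_comm]
  refine Finset.sum_congr rfl fun β _ => ?_
  rw [Finset.sum_comm]

lemma DA_comm (hQ : ∀ α, IsDiffFun (Q α) ({(0 : Idx p)} : Finset (Idx p)))
    {F : Fld p q → ℝ} (h : Sm F) {A W : Finset (Idx p)} (hAW : A ⊆ W) (u : Fld p q) :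
    DA Q W (DA Q A F) u = DA Q A (DA Q W F) u := by
  have split : ∀ H : Fld p q → ℝ, DA Q W H = fun u => DA Q (W \ A) H u + DA Q A H u := by
    intro H
    funext u
    simp only [DA, ← Finset.sum_add_distrib]
    refine Finset.sum_congr rfl fun α _ => ?_
    rw [Finset.sum_sdiff hAW]
  rw [split (DA Q A F), split F, DA_add (h.DA hQ _) (h.DA hQ _),
    ← DA_comm_disj hQ h Finset.sdiff_disjoint]

lemma prv_eq_DA {F : DFun p q} {S : Finset (Idx p)} (h : IsDiffFun F S) (n : Idx p)
    (W : Finset (Idx p)) (hW : ∀ K ∈ S, n + K ∈ W) (u : Fld p q) :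
    prv Q S F n u = DA Q W (F n) u := by
  unfold prv DA
  refine Finset.sum_congr rfl fun α _ => ?_
  refine Finset.sum_of_injOn (fun K => n + K) (fun a _ b _ hab => by simpa using hab)
    (fun K hK => hW K hK) ?_ (fun K _ => rfl)
  intro m _ hm
  rw [h.dd_zero n m, mul_zero]
  intro hc
  exact hm ⟨m - n, hc, by simp⟩

end DAlemmas

lemma exists_bound (S : Finset (Idx 1)) : ∃ C : ℕ, ∀ K ∈ S, |K 0| ≤ (C : ℤ) := by
  refine ⟨∑ K ∈ S, (K 0).natAbs, fun K hK => ?_⟩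
  have := Finset.single_le_sum (f := fun K : Idx 1 => (K 0).natAbs) (fun _ _ => Nat.zero_le _) hK
  rw [abs_le]
  omega

lemma le1 (a b : Idx 1) : a ≤ b ↔ a 0 ≤ b 0 := by
  simp [Pi.le_def]

lemma ext1 {a b : Idx 1} (h : a 0 = b 0) : a = b := by
  funext i
  rw [Subsingleton.elim i 0, h]

/-- Constant multi-index. -/
def cc (k : ℤ) : Idx 1 := fun _ => k

lemma TT_eq {q : ℕ} (Q : Fin q → DFun 1 q)
    (L : DFun 1 q) (S : Finset (Idx 1)) (hL : IsDiffFun L S)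
    (C M : ℕ) (hC : ∀ K ∈ S, |K 0| ≤ (C : ℤ)) (hM : C ≤ M) (n : Idx 1) (u : Fld 1 q) :
    TT Q S 0 L n u = DA Q (Finset.Icc n (n + cc M))
      (fun u => ∑ k ∈ Finset.range (C + 1), L (n - cc (k + 1)) u) u := by
  unfold TT DA
  refine Finset.sum_congr rfl fun α _ => ?_
  refine Finset.sum_of_injOn (fun J => n + J - Pi.single 0 (1 : ℤ))
    (fun a _ b _ hab => by simpa using hab) ?_ ?_ ?_
  · intro J hJ
    simp only [Finset.coe_biUnion, Set.mem_iUnion, Finset.mem_coe, Finset.mem_Icc, le1] at hJ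
    obtain ⟨K, hK, h1, h2⟩ := hJ
    have := abs_le.mp (hC K hK)
    simp only [Finset.mem_coe, Finset.mem_Icc, le1, Pi.add_apply, Pi.sub_apply, Pi.single_eq_same,
      cc] at *
    omega
  · intro m hm hJ
    rw [dd_sum _ (fun k _ => hL.sm _), Finset.sum_eq_zero, mul_zero]
    intro k hk
    apply hL.dd_zero
    intro hc
    apply hJ
    refine ⟨m - n + Pi.single 0 1, ?_, by
      change n + (m - n + Pi.single 0 1) - Pi.single 0 1 = m
      abel⟩
    simp only [Finset.coe_biUnion, Set.mem_iUnion, Finset.mem_coe, Finset.mem_Icc, le1] at hm ⊢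
    refine ⟨_, hc, ?_⟩
    simp only [Pi.add_apply, Pi.sub_apply, Pi.single_eq_same, cc] at *
    omega
  · intro J hJ
    simp only [Finset.mem_biUnion, Finset.mem_Icc, le1, Pi.single_eq_same] at hJ
    obtain ⟨K', hK', h1, h2⟩ := hJ
    rw [dd_sum _ (fun k _ => hL.sm _)]
    congr 1
    unfold hEuler
    have idx : ∀ K : Idx 1, J ≤ K →
        n - Pi.single 0 1 - (K - J) = n - cc (((K 0 - J 0).toNat : ℤ) + 1) := by
      intro K hK
      rw [le1] at hK
      apply ext1
      simp only [Pi.sub_apply, Pi.single_eq_same, cc]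
      omega
    refine Finset.sum_of_injOn (fun K => (K 0 - J 0).toNat) ?_ ?_ ?_ ?_
    · intro a ha b hb hab
      simp only [Finset.coe_filter, Set.mem_ofPred_eq, le1] at ha hb hab
      apply ext1
      omega
    · intro K hK
      simp only [Finset.coe_filter, Set.mem_ofPred_eq, le1] at hK
      have := abs_le.mp (hC K hK.1)
      simp only [Finset.coe_range, Set.mem_Iio]
      omega
    · intro k _ hk
      apply hL.dd_zero
      intro hc
      apply hk
      refine ⟨n + J - Pi.single 0 1 - (n - cc ((k : ℤ) + 1)), ?_, ?_⟩
      · simp only [Finset.coe_filter, Set.mem_ofPred_eq, le1]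
        refine ⟨hc, ?_⟩
        simp only [Pi.add_apply, Pi.sub_apply, Pi.single_eq_same, cc]
        omega
      · simp only [Pi.add_apply, Pi.sub_apply, Pi.single_eq_same, cc]
        omega
    · intro K hK
      rw [Finset.mem_filter] at hK
      have e : n + J - Pi.single 0 1 = n - Pi.single 0 1 - (K - J) + K := by abel
      rw [e, ← idx K hK.2]
      rfl

/-- **p = 1.** Let `Q` be a Lie point characteristic generating
divergence variational symmetries of the difference Lagrangian `L`, i.e.
`(pr v L)(n,u) = R(n+1,u) − R(n,u)` for all `n` and `u`, where `R` depends only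
on forward values.  Then the prolonged vector field annihilates the first
integral `P = T(L) − R`: `(pr v P)(n,u) = 0` for all `n` and `u`. -/
theorem stmt_12 {q : ℕ} (hq : 1 ≤ q)
    (Q : Fin q → DFun 1 q)
    (hQ : ∀ α, IsDiffFun (Q α) ({(0 : Idx 1)} : Finset (Idx 1)))
    (L : DFun 1 q) (S : Finset (Idx 1)) (hL : IsDiffFun L S)
    (hS : ∀ K ∈ S, (0 : Idx 1) ≤ K)
    (R : DFun 1 q) (SR : Finset (Idx 1)) (hR : IsDiffFun R SR)
    (hSR : ∀ K ∈ SR, (0 : Idx 1) ≤ K)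
    (hsym : ∀ (n : Idx 1) (u : Fld 1 q),
      prv Q S L n u = R (n + Pi.single 0 (1 : ℤ)) u - R n u)
    (SP : Finset (Idx 1))
    (hSP : IsDiffFun (fun n' u' => TT Q S 0 L n' u' - R n' u') SP) :
    ∀ (n : Idx 1) (u : Fld 1 q),
      prv Q SP (fun n' u' => TT Q S 0 L n' u' - R n' u') n u = 0 := by
  intro n u
  obtain ⟨C, hC⟩ := exists_bound (S ∪ SR ∪ SP)
  have hCS : ∀ K ∈ S, |K 0| ≤ (C : ℤ) := fun K hK => hC K (by simp [hK])
  have hCR : ∀ K ∈ SR, |K 0| ≤ (C : ℤ) := fun K hK => hC K (by simp [hK])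
  have hCP : ∀ K ∈ SP, |K 0| ≤ (C : ℤ) := fun K hK => hC K (by simp [hK])
  obtain ⟨M, hM⟩ : ∃ M : ℕ, M = 2 * C + 5 := ⟨_, rfl⟩
  set A : Finset (Idx 1) := Finset.Icc n (n + cc M) with hA
  set W : Finset (Idx 1) := Finset.Icc (n - cc M) (n + cc M) with hW
  have hAW : A ⊆ W := by
    intro m hm
    simp only [hA, hW, Finset.mem_Icc, le1, Pi.add_apply, Pi.sub_apply, cc] at hm ⊢
    omega
  set Λ : Fld 1 q → ℝ := fun u => ∑ k ∈ Finset.range (C + 1), L (n - cc (k + 1)) u with hΛ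
  have hΛs : Sm Λ := Sm.sum _ fun k _ => hL.sm _
  have hT : TT Q S 0 L n = DA Q A Λ := by
    funext u
    exact TT_eq Q L S hL C M hCS (by omega) n u
  rw [prv_eq_DA hSP n W]
  swap
  · intro K hK
    have := abs_le.mp (hCP K hK)
    simp only [hW, Finset.mem_Icc, le1, Pi.add_apply, Pi.sub_apply, cc]
    omega
  have hTs : Sm (TT Q S 0 L n) := by rw [hT]; exact hΛs.DA hQ A
  have e1 : DA Q W (fun u' => TT Q S 0 L n u' - R n u') u =
      DA Q W (TT Q S 0 L n) u - DA Q W (R n) u := DA_sub hTs (hR.sm n) W u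
  have e2 : DA Q W Λ = fun u => R n u - R (n - cc (C + 1)) u := by
    funext u
    rw [hΛ, DA_sum _ (fun k _ => hL.sm _)]
    have : ∀ k ∈ Finset.range (C + 1), DA Q W (L (n - cc (k + 1))) u =
        R (n - cc (k : ℤ)) u - R (n - cc ((k + 1 : ℕ) : ℤ)) u := by
      intro k hk
      rw [Finset.mem_range] at hk
      rw [← prv_eq_DA hL, hsym]
      · congr 2
        apply ext1
        simp only [Pi.add_apply, Pi.sub_apply, Pi.single_eq_same, cc]
        omega
      · intro K hK
        have := abs_le.mp (hCS K hK)
        simp only [hW, Finset.mem_Icc, le1, Pi.add_apply, Pi.sub_apply, cc]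
        omega
    rw [Finset.sum_congr rfl this, Finset.sum_range_sub' (fun k : ℕ => R (n - cc (k : ℤ)) u)]
    have h0 : n - cc ((0 : ℕ) : ℤ) = n := by
      apply ext1
      simp [cc]
    rw [h0]
    push_cast
    rfl
  have e3 : DA Q A (R (n - cc (C + 1))) u = 0 := by
    refine Finset.sum_eq_zero fun α _ => Finset.sum_eq_zero fun m hm => ?_
    rw [hR.dd_zero, mul_zero]
    intro hc
    have := abs_le.mp (hCR _ hc)
    simp only [hA, Finset.mem_Icc, le1, Pi.add_apply, Pi.sub_apply, cc] at hm this
    omega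
  have e4 : DA Q W (R n) u = DA Q A (R n) u := by
    rw [← prv_eq_DA hR n W, ← prv_eq_DA hR n A]
    · intro K hK
      have := abs_le.mp (hCR K hK)
      have h0 := hSR K hK
      simp only [hA, Finset.mem_Icc, le1, Pi.add_apply, Pi.zero_apply, cc] at h0 ⊢
      omega
    · intro K hK
      have := abs_le.mp (hCR K hK)
      simp only [hW, Finset.mem_Icc, le1, Pi.add_apply, Pi.sub_apply, cc]
      omega
  rw [e1, hT, DA_comm hQ hΛs hAW, e2, DA_sub (hR.sm n) (hR.sm _), e3, e4]
  ring
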